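/- Let K = n, M = ⌈n^α⌉, r = ⌈n^β⌉ with constants 0 < α, β < 1/2 satisfying α + 2β ≥ 1 + 2·log log n/log n, under the Uniform popularity distribution. Then with high probability over the cache placement (in particular on the event that the placement is ((1−α)/3, μ)-good for a constant μ and that every node w and file j have F_j(w) = Θ(r²M/n) cached replicas of W_j in B_r(w)), for every edge (u,v) of the configuration graph H, the conditional probability, given the placement, that a single request of Strategy II selects the pair {u,v} as its two candidate servers is O(1/e(H)). -/

import Mathlib

/-!
The scale `X = r² M / n` is at least the power `n ^ (α + 2β - 1)` of `n`, with a positive exponent,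
so by Chernoff's bound for independent events `F_j(w)` lies between `X / 32` and `73 X` for all `w`
and `j`, the upper bound holding even for the ball of radius `2r`. Two independent caches share at
least `μ` files with probability `O((M² / n) ^ μ)`, which beats the number of pairs for a large
constant `μ` because `α < 1/2`; and a cache with at most `M / 3` distinct files takes all its values
in one of the sets of `⌊M / 3⌋` files, which a union bound over these sets rules out.

On this event the estimate is deterministic. A request selects `{u, v}` only if its origin lies in
`B_r(u)` and its file is one of the fewer than `μ` files common to `u` and `v`, so this has
probability at most `16 r² · μ · 2 / (X / 32)² / n²`. A neighbour of `u` in `H` stores one of the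
`M` files of `u` within distance `2r`, so `e(H) ≤ n · M · 73 X / 2`. As `r² M / n = X`, the product
of the two bounds is a constant.
-/

open scoped Classical BigOperators
open Filter

/-- Nodes of the `m × m` torus grid (a `√n × √n` grid with wrap-around, `n = m²`). -/
abbrev Node (m : ℕ) := Fin m × Fin m

/-- Wrap-around distance between two coordinates in `Fin m`. -/
def cdist {m : ℕ} (a b : Fin m) : ℕ :=
  min ((a.val + m - b.val) % m) ((b.val + m - a.val) % m)

/-- Graph (shortest-path) distance on the torus grid. -/
def torusDist {m : ℕ} (u v : Node m) : ℕ := cdist u.1 v.1 + cdist u.2 v.2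

/-- A cache placement: each of the `m²` nodes fills `M` cache slots with files from a
library of `K` files.  Under the Uniform popularity distribution the random placement
is uniform over all such functions (each slot i.i.d. uniform on the `K` files). -/
abbrev Placement (m M K : ℕ) := Node m → Fin M → Fin K

/-- Node `u` has cached file `j`. -/
def cached {m M K : ℕ} (ω : Placement m M K) (u : Node m) (j : Fin K) : Prop :=
  ∃ i, ω u i = j

/-- Probability of an event under the uniform measure on a finite type. -/
noncomputable def unifProb {Ω : Type*} [Fintype Ω] (E : Set Ω) : ℝ :=
  ((Finset.univ.filter (fun ω => ω ∈ E)).card : ℝ) / (Fintype.card Ω : ℝ)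

/-- The set of candidate servers for a request at `w` for file `j` with proximity
radius `r`: the nodes within graph distance `r` of `w` that cached file `j`. -/
noncomputable def candSet {m M K : ℕ} (ω : Placement m M K) (w : Node m) (j : Fin K)
    (r : ℕ) : Finset (Node m) :=
  Finset.univ.filter fun v => cached ω v j ∧ torusDist w v ≤ r

/-- `F_j(w)`: the number of nodes within distance `r` of `w` that cached file `j`. -/
noncomputable def Fcount {m M K : ℕ} (ω : Placement m M K) (r : ℕ) (w : Node m)
    (j : Fin K) : ℕ :=
  (candSet ω w j r).card

/-- `t(u)`: the number of distinct files cached at node `u`. -/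
noncomputable def tOne {m M K : ℕ} (ω : Placement m M K) (u : Node m) : ℕ :=
  (Finset.univ.image (ω u)).card

/-- `t(u,v)`: the number of distinct files cached at both `u` and `v`. -/
noncomputable def tTwo {m M K : ℕ} (ω : Placement m M K) (u v : Node m) : ℕ :=
  (Finset.univ.image (ω u) ∩ Finset.univ.image (ω v)).card

/-- A placement is `(δ,μ)`-good if every node caches at least `δ·M` distinct files and
every pair of distinct nodes shares fewer than `μ` distinct files. -/
def goodPlacement {m M K : ℕ} (δ : ℝ) (μ : ℕ) (ω : Placement m M K) : Prop :=
  (∀ u, δ * (M : ℝ) ≤ (tOne ω u : ℝ)) ∧ ∀ u v, u ≠ v → tTwo ω u v < μ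

/-- Adjacency in the configuration graph `H` with radius `r`. -/
def adjH {m M K : ℕ} (ω : Placement m M K) (r : ℕ) (u v : Node m) : Prop :=
  u ≠ v ∧ (∃ j, cached ω u j ∧ cached ω v j) ∧ torusDist u v ≤ 2 * r

/-- Degree of `u` in the configuration graph `H`. -/
noncomputable def degH {m M K : ℕ} (ω : Placement m M K) (r : ℕ) (u : Node m) : ℕ :=
  (Finset.univ.filter fun v => adjH ω r u v).card

/-- Number of edges of the configuration graph `H`. -/
noncomputable def eH {m M K : ℕ} (ω : Placement m M K) (r : ℕ) : ℝ :=
  (∑ u : Node m, (degH ω r u : ℝ)) / 2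

/-- Given the placement `ω`, the conditional probability that a single request of
Strategy II — uniform origin `w`, uniform file `j`, two candidates drawn uniformly
from the caches of `W_j` within distance `r` of `w` — selects the pair `{u,v}` as its
two candidate servers. -/
noncomputable def selectProb {m M K : ℕ} (ω : Placement m M K) (r : ℕ)
    (u v : Node m) : ℝ :=
  (∑ w : Node m, ∑ j : Fin K,
      if u ∈ candSet ω w j r ∧ v ∈ candSet ω w j r then
        2 / ((candSet ω w j r).card : ℝ) ^ 2
      else 0) / (((m ^ 2 : ℕ) : ℝ) * (K : ℝ))

/-- Cache size `M = ⌈n^α⌉`. -/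
noncomputable def Mf (α : ℝ) (n : ℕ) : ℕ := ⌈(n : ℝ) ^ α⌉₊

/-- Proximity radius `r = ⌈n^β⌉`. -/
noncomputable def rf (β : ℝ) (n : ℕ) : ℕ := ⌈(n : ℝ) ^ β⌉₊

section Chernoff

open MeasureTheory ProbabilityTheory

variable {Ω ι : Type*} [MeasurableSpace Ω] {P : Measure Ω} {E : ι → Set Ω}

lemma mgf_indicator_one_le [IsProbabilityMeasure P] {A : Set Ω} (hA : MeasurableSet A) (t : ℝ) :
    mgf (A.indicator fun _ ↦ 1) P t ≤ Real.exp ((Real.exp t - 1) * P.real A) := by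
  have hexp : ∀ ω, Real.exp (t * A.indicator (fun _ ↦ 1) ω) =
      1 + A.indicator (fun _ ↦ Real.exp t - 1) ω := by
    intro ω
    by_cases hω : ω ∈ A <;> simp [hω]
  have hmgf : mgf (A.indicator fun _ ↦ 1) P t = (Real.exp t - 1) * P.real A + 1 := by
    simp only [mgf, hexp]
    rw [integral_add (integrable_const _) ((integrable_const _).indicator hA),
      integral_indicator_const _ hA]
    simp only [integral_const, probReal_univ, smul_eq_mul, mul_one]
    ring
  exact hmgf.trans_le (Real.add_one_le_exp _)

lemma mgf_card_filter_mem_le (hE : ∀ i, MeasurableSet (E i)) (hindep : iIndepSet E P)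
    (B : Finset ι) (t : ℝ) :
    mgf (fun ω ↦ ((B.filter fun i ↦ ω ∈ E i).card : ℝ)) P t ≤
      Real.exp ((Real.exp t - 1) * ∑ i ∈ B, P.real (E i)) := by
  have := hindep.isProbabilityMeasure
  have hsum : (fun ω ↦ ((B.filter fun i ↦ ω ∈ E i).card : ℝ)) =
      ∑ i ∈ B, (E i).indicator fun _ ↦ (1 : ℝ) := by
    ext ω
    simp [Set.indicator_apply]
  rw [hsum, (hindep.iIndepFun_indicator (β := ℝ)).mgf_sum
    (fun i ↦ measurable_const.indicator (hE i)), Finset.mul_sum, Real.exp_sum]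
  exact Finset.prod_le_prod (fun _ _ ↦ mgf_nonneg) fun i _ ↦ mgf_indicator_one_le (hE i) t

lemma integrable_exp_mul_card_filter_mem [IsFiniteMeasure P] (hE : ∀ i, MeasurableSet (E i))
    (B : Finset ι) (t : ℝ) :
    Integrable (fun ω ↦ Real.exp (t * ((B.filter fun i ↦ ω ∈ E i).card : ℝ))) P := by
  refine integrable_exp_mul_of_mem_Icc (a := 0) (b := B.card) ?_ (ae_of_all _ fun ω ↦ ?_)
  · simp only [Finset.card_filter, Nat.cast_sum]
    exact (Finset.measurable_sum _ fun i _ ↦ (measurable_of_countable _).comp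
      (Measurable.ite (hE i) measurable_const measurable_const)).aemeasurable
  · exact ⟨Nat.cast_nonneg _, Nat.cast_le.2 (Finset.card_filter_le _ _)⟩

lemma measureReal_le_card_filter_mem_le_exp (hE : ∀ i, MeasurableSet (E i))
    (hindep : iIndepSet E P) (B : Finset ι) {t : ℝ} (ht : 0 ≤ t) (a : ℝ) :
    P.real {ω | a ≤ ((B.filter fun i ↦ ω ∈ E i).card : ℝ)} ≤
      Real.exp ((Real.exp t - 1) * ∑ i ∈ B, P.real (E i) - t * a) := by
  have := hindep.isProbabilityMeasure
  refine (measure_ge_le_exp_mul_mgf a ht (integrable_exp_mul_card_filter_mem hE B t)).trans ?_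
  rw [sub_eq_neg_add, Real.exp_add, ← neg_mul]
  gcongr
  exact mgf_card_filter_mem_le hE hindep B t

lemma measureReal_card_filter_mem_le_le_exp (hE : ∀ i, MeasurableSet (E i))
    (hindep : iIndepSet E P) (B : Finset ι) {t : ℝ} (ht : t ≤ 0) (a : ℝ) :
    P.real {ω | ((B.filter fun i ↦ ω ∈ E i).card : ℝ) ≤ a} ≤
      Real.exp ((Real.exp t - 1) * ∑ i ∈ B, P.real (E i) - t * a) := by
  have := hindep.isProbabilityMeasure
  refine (measure_le_le_exp_mul_mgf a ht (integrable_exp_mul_card_filter_mem hE B t)).trans ?_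
  rw [sub_eq_neg_add, Real.exp_add, ← neg_mul]
  gcongr
  exact mgf_card_filter_mem_le hE hindep B t

lemma measureReal_le_card_filter_mem_le_exp_sub (hE : ∀ i, MeasurableSet (E i))
    (hindep : iIndepSet E P) {B : Finset ι} {x : ℝ} (hx : ∑ i ∈ B, P.real (E i) ≤ x) (a : ℝ) :
    P.real {ω | a ≤ ((B.filter fun i ↦ ω ∈ E i).card : ℝ)} ≤ Real.exp (2 * x - a) := by
  refine (measureReal_le_card_filter_mem_le_exp hE hindep B zero_le_one a).trans ?_
  have hexp := Real.exp_one_lt_d9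
  gcongr <;> linarith

lemma measureReal_card_filter_mem_le_le_exp_sub (hE : ∀ i, MeasurableSet (E i))
    (hindep : iIndepSet E P) {B : Finset ι} {x : ℝ} (hx : x ≤ ∑ i ∈ B, P.real (E i)) (a : ℝ) :
    P.real {ω | ((B.filter fun i ↦ ω ∈ E i).card : ℝ) ≤ a} ≤ Real.exp (a - x / 2) := by
  refine (measureReal_card_filter_mem_le_le_exp hE hindep B neg_one_lt_zero.le a).trans ?_
  have hsum : 0 ≤ ∑ i ∈ B, P.real (E i) := Finset.sum_nonneg fun _ _ ↦ measureReal_nonneg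
  have hexp := Real.exp_neg_one_lt_half
  rw [Real.exp_le_exp]
  nlinarith

lemma measureReal_le_card_filter_mem_le_pow (hE : ∀ i, MeasurableSet (E i))
    (hindep : iIndepSet E P) {B : Finset ι} {x : ℝ} (hx : ∑ i ∈ B, P.real (E i) ≤ x)
    (hx0 : 0 < x) (hx1 : x ≤ 1) (k : ℕ) :
    P.real {ω | k ≤ (B.filter fun i ↦ ω ∈ E i).card} ≤ Real.exp 1 * x ^ k := by
  have hbound := measureReal_le_card_filter_mem_le_exp hE hindep B
    (Real.log_nonneg ((one_le_inv₀ hx0).2 hx1)) k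
  simp only [Nat.cast_le, Real.exp_log (inv_pos.2 hx0)] at hbound
  refine hbound.trans ?_
  have hexponent : (x⁻¹ - 1) * ∑ i ∈ B, P.real (E i) ≤ 1 := by
    have hinv : 0 ≤ x⁻¹ - 1 := sub_nonneg.2 ((one_le_inv₀ hx0).2 hx1)
    calc (x⁻¹ - 1) * ∑ i ∈ B, P.real (E i) ≤ (x⁻¹ - 1) * x := by gcongr
      _ = 1 - x := by field_simp
      _ ≤ 1 := by linarith
  calc Real.exp ((x⁻¹ - 1) * ∑ i ∈ B, P.real (E i) - Real.log x⁻¹ * k)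
      ≤ Real.exp (1 + k * Real.log x) := by
        rw [Real.log_inv, Real.exp_le_exp]
        linarith
    _ = Real.exp 1 * x ^ k := by rw [Real.exp_add, Real.exp_nat_mul, Real.exp_log hx0]

end Chernoff

section ProductMeasure

open MeasureTheory ProbabilityTheory

lemma iIndepSet_eval_preimage {ι : Type*} [Fintype ι] {X : ι → Type*}
    [∀ i, MeasurableSpace (X i)] (ν : ∀ i, Measure (X i)) [∀ i, IsProbabilityMeasure (ν i)]
    {S : ∀ i, Set (X i)} (hS : ∀ i, MeasurableSet (S i)) :
    iIndepSet (fun i ↦ {x : ∀ i, X i | x i ∈ S i}) (Measure.pi ν) := by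
  have hindep := iIndepFun_pi (μ := ν) (X := fun _ ↦ id) fun _ ↦ aemeasurable_id
  refine (iIndepSet_iff_meas_biInter fun i ↦ measurable_pi_apply i (hS i)).2 ?_
  exact fun s ↦ hindep.meas_biInter fun i _ ↦ ⟨S i, hS i, rfl⟩

lemma measureReal_pi_eval_preimage {ι : Type*} [Fintype ι] {X : ι → Type*}
    [∀ i, MeasurableSpace (X i)] (ν : ∀ i, Measure (X i)) [∀ i, IsProbabilityMeasure (ν i)]
    (i : ι) {S : Set (X i)} (hS : MeasurableSet S) :
    (Measure.pi ν).real {x | x i ∈ S} = (ν i).real S :=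
  (measurePreserving_eval ν i).measureReal_preimage hS.nullMeasurableSet

lemma measureReal_le_of_indepFun {Ω X Y : Type*} [MeasurableSpace Ω] [MeasurableSpace X]
    [MeasurableSpace Y] {P : Measure Ω} [IsProbabilityMeasure P] {f : Ω → X} {g : Ω → Y}
    (hf : Measurable f) (hg : Measurable g) (hfg : IndepFun f g P) {S : Set (X × Y)}
    (hS : MeasurableSet S) {q : ℝ} (hq : ∀ x, P.real {ω | (x, g ω) ∈ S} ≤ q) :
    P.real {ω | (f ω, g ω) ∈ S} ≤ q := by
  have := Measure.isProbabilityMeasure_map (μ := P) hf.aemeasurable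
  have hlaw := (indepFun_iff_map_prod_eq_prod_map_map hf.aemeasurable hg.aemeasurable).1 hfg
  obtain ⟨ω₀⟩ := P.nonempty_of_neZero
  have hq0 : 0 ≤ q := measureReal_nonneg.trans (hq (f ω₀))
  refine ENNReal.toReal_le_of_le_ofReal hq0 ?_
  calc P {ω | (f ω, g ω) ∈ S} = (P.map f).prod (P.map g) S := by
        rw [← hlaw, Measure.map_apply (hf.prodMk hg) hS]; rfl
    _ = ∫⁻ x, P {ω | (x, g ω) ∈ S} ∂(P.map f) := by
        rw [Measure.prod_apply hS]
        exact lintegral_congr fun x ↦ Measure.map_apply hg (measurable_prodMk_left hS)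
    _ ≤ ∫⁻ _, ENNReal.ofReal q ∂(P.map f) := lintegral_mono fun x ↦
        (ENNReal.le_ofReal_iff_toReal_le (measure_ne_top _ _) hq0).2 (hq x)
    _ = ENNReal.ofReal q := by simp

lemma measureReal_exists_le_card_mul {Ω ι : Type*} [MeasurableSpace Ω] [Fintype ι]
    {P : Measure Ω} [IsFiniteMeasure P] {p : ι → Ω → Prop} {q : ℝ}
    (hq : ∀ i, P.real {ω | p i ω} ≤ q) :
    P.real {ω | ∃ i, p i ω} ≤ Fintype.card ι * q := by
  have hunion : {ω | ∃ i, p i ω} = ⋃ i, {ω | p i ω} := by ext; simp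
  rw [hunion]
  calc P.real (⋃ i, {ω | p i ω}) ≤ ∑ i, P.real {ω | p i ω} := measureReal_iUnion_fintype_le _
    _ ≤ ∑ _i : ι, q := Finset.sum_le_sum fun i _ ↦ hq i
    _ = Fintype.card ι * q := by simp

end ProductMeasure

section Torus

variable {m : ℕ}

lemma cdist_eq_min_sub (a b : Fin m) : cdist a b = min (a - b).val (b - a).val := by
  have ha := a.isLt
  have hb := b.isLt
  simp only [cdist, Fin.val_sub]
  congr 2 <;> omega

lemma cdist_comm (a b : Fin m) : cdist a b = cdist b a :=
  min_comm _ _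

lemma torusDist_comm (u v : Node m) : torusDist u v = torusDist v u := by
  simp only [torusDist, cdist_comm]

lemma card_filter_sub_left_le [NeZero m] (a : Fin m) (k : ℕ) :
    (Finset.univ.filter fun b : Fin m ↦ (a - b).val ≤ k).card = min m (k + 1) := by
  rw [← Fin.card_filter_val_lt]
  exact Finset.card_equiv (Equiv.subLeft a) (by simp)

lemma card_filter_sub_right_le [NeZero m] (a : Fin m) (k : ℕ) :
    (Finset.univ.filter fun b : Fin m ↦ (b - a).val ≤ k).card = min m (k + 1) := by
  rw [← Fin.card_filter_val_lt]
  exact Finset.card_equiv (Equiv.subRight a) (by simp)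

lemma card_filter_cdist_le (a : Fin m) (k : ℕ) :
    (Finset.univ.filter fun b ↦ cdist a b ≤ k).card ≤ 2 * (k + 1) := by
  have : NeZero m := ⟨a.pos.ne'⟩
  simp only [cdist_eq_min_sub, min_le_iff, Finset.filter_or]
  refine (Finset.card_union_le _ _).trans ?_
  rw [card_filter_sub_left_le, card_filter_sub_right_le]
  omega

lemma lt_card_filter_cdist (a : Fin m) {k : ℕ} (hk : k < m) :
    k < (Finset.univ.filter fun b ↦ cdist a b ≤ k).card := by
  have : NeZero m := ⟨a.pos.ne'⟩
  calc k < (Finset.univ.filter fun b : Fin m ↦ (a - b).val ≤ k).card := by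
        rw [card_filter_sub_left_le]; omega
    _ ≤ _ := by
        refine Finset.card_le_card fun b hb ↦ ?_
        rw [Finset.mem_filter_univ] at hb ⊢
        exact (cdist_eq_min_sub a b).trans_le ((min_le_left _ _).trans hb)

/-- The ball `B_r(w)` of the torus. -/
noncomputable def torusBall (w : Node m) (r : ℕ) : Finset (Node m) :=
  Finset.univ.filter fun v ↦ torusDist w v ≤ r

lemma mem_torusBall {u v : Node m} {r : ℕ} : v ∈ torusBall u r ↔ torusDist u v ≤ r := by
  simp [torusBall]

lemma card_torusBall_le (w : Node m) (r : ℕ) : (torusBall w r).card ≤ (2 * (r + 1)) ^ 2 := by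
  have hsub : torusBall w r ⊆ (Finset.univ.filter fun b ↦ cdist w.1 b ≤ r) ×ˢ
      (Finset.univ.filter fun b ↦ cdist w.2 b ≤ r) := by
    intro v hv
    rw [mem_torusBall, torusDist] at hv
    simp only [Finset.mem_product, Finset.mem_filter_univ]
    omega
  refine (Finset.card_le_card hsub).trans ?_
  rw [Finset.card_product, sq]
  exact Nat.mul_le_mul (card_filter_cdist_le _ _) (card_filter_cdist_le _ _)

lemma sq_le_card_torusBall (w : Node m) {r : ℕ} (hr : r < m) :
    (r / 2 + 1) ^ 2 ≤ (torusBall w r).card := by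
  have hsub : (Finset.univ.filter fun b ↦ cdist w.1 b ≤ r / 2) ×ˢ
      (Finset.univ.filter fun b ↦ cdist w.2 b ≤ r / 2) ⊆ torusBall w r := by
    intro v hv
    simp only [Finset.mem_product, Finset.mem_filter_univ] at hv
    rw [mem_torusBall, torusDist]
    omega
  refine le_trans ?_ (Finset.card_le_card hsub)
  rw [Finset.card_product, sq]
  exact Nat.mul_le_mul (lt_card_filter_cdist _ (by omega)) (lt_card_filter_cdist _ (by omega))

lemma card_torusBall_le_mul_sq (w : Node m) {r : ℕ} (hr : 0 < r) :
    ((torusBall w r).card : ℝ) ≤ 16 * (r : ℝ) ^ 2 := by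
  have hcard : (torusBall w r).card ≤ 16 * r ^ 2 :=
    (card_torusBall_le w r).trans (by nlinarith)
  exact_mod_cast hcard

lemma card_torusBall_two_mul_le (w : Node m) {r : ℕ} (hr : 0 < r) :
    ((torusBall w (2 * r)).card : ℝ) ≤ 36 * (r : ℝ) ^ 2 := by
  have hcard : (torusBall w (2 * r)).card ≤ 36 * r ^ 2 :=
    (card_torusBall_le w (2 * r)).trans (by nlinarith)
  exact_mod_cast hcard

lemma sq_div_four_le_card_torusBall (w : Node m) {r : ℕ} (hr : r < m) :
    (r : ℝ) ^ 2 / 4 ≤ (torusBall w r).card := by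
  have hhalf : r ≤ 2 * (r / 2 + 1) := by omega
  have hcard : r ^ 2 ≤ 4 * (torusBall w r).card :=
    calc r ^ 2 ≤ (2 * (r / 2 + 1)) ^ 2 := by gcongr
      _ = 4 * (r / 2 + 1) ^ 2 := by ring
      _ ≤ 4 * (torusBall w r).card := by gcongr; exact sq_le_card_torusBall w hr
  rw [div_le_iff₀' four_pos]
  exact_mod_cast hcard

end Torus

section ConfigurationGraph

variable {m M K : ℕ}

lemma Fcount_mono (ω : Placement m M K) {r s : ℕ} (hrs : r ≤ s) (w : Node m) (j : Fin K) :
    Fcount ω r w j ≤ Fcount ω s w j := by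
  refine Finset.card_le_card fun v hv ↦ ?_
  simp only [candSet, Finset.mem_filter_univ] at hv ⊢
  exact ⟨hv.1, hv.2.trans hrs⟩

lemma degH_le_mul {ω : Placement m M K} {r : ℕ} {u : Node m} {y : ℝ}
    (hy : ∀ j, (Fcount ω (2 * r) u j : ℝ) ≤ y) : (degH ω r u : ℝ) ≤ M * y := by
  have hsub : (Finset.univ.filter fun v ↦ adjH ω r u v) ⊆
      Finset.univ.biUnion fun i ↦ candSet ω u (ω u i) (2 * r) := by
    intro v hv
    obtain ⟨-, ⟨j, ⟨i, hi⟩, hvj⟩, hdist⟩ := (Finset.mem_filter_univ _).1 hv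
    simp only [Finset.mem_biUnion, candSet, Finset.mem_filter_univ]
    exact ⟨i, Finset.mem_univ _, hi ▸ hvj, hdist⟩
  have hdeg : degH ω r u ≤ ∑ i, Fcount ω (2 * r) u (ω u i) :=
    (Finset.card_le_card hsub).trans Finset.card_biUnion_le
  calc (degH ω r u : ℝ) ≤ ∑ i, (Fcount ω (2 * r) u (ω u i) : ℝ) := mod_cast hdeg
    _ ≤ ∑ _i : Fin M, y := Finset.sum_le_sum fun i _ ↦ hy _
    _ = M * y := by simp

lemma eH_le_mul {ω : Placement m M K} {r : ℕ} {y : ℝ}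
    (hy : ∀ u j, (Fcount ω (2 * r) u j : ℝ) ≤ y) : eH ω r ≤ (m : ℝ) ^ 2 * (M * y) / 2 := by
  refine div_le_div_of_nonneg_right ?_ zero_le_two
  calc ∑ u : Node m, (degH ω r u : ℝ) ≤ ∑ _u : Node m, M * y :=
        Finset.sum_le_sum fun u _ ↦ degH_le_mul (hy u)
    _ = (m : ℝ) ^ 2 * (M * y) := by simp [sq]

lemma eH_pos {ω : Placement m M K} {r : ℕ} {u v : Node m} (huv : adjH ω r u v) : 0 < eH ω r := by
  have hdeg : 0 < degH ω r u := Finset.card_pos.2 ⟨v, (Finset.mem_filter_univ _).2 huv⟩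
  exact half_pos (Finset.sum_pos' (fun _ _ ↦ Nat.cast_nonneg _)
    ⟨u, Finset.mem_univ u, Nat.cast_pos.2 hdeg⟩)

/-- The set of files cached at both `u` and `v`. -/
noncomputable def commonFiles (ω : Placement m M K) (u v : Node m) : Finset (Fin K) :=
  Finset.univ.image (ω u) ∩ Finset.univ.image (ω v)

lemma mem_commonFiles {ω : Placement m M K} {u v : Node m} {j : Fin K} :
    j ∈ commonFiles ω u v ↔ cached ω u j ∧ cached ω v j := by
  simp [commonFiles, cached]

lemma selectProb_le {ω : Placement m M K} {r : ℕ} {z : ℝ} (hz : 0 < z)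
    (hF : ∀ w j, z ≤ (Fcount ω r w j : ℝ)) (u v : Node m) :
    selectProb ω r u v ≤
      (torusBall u r).card * tTwo ω u v * (2 / z ^ 2) / ((m : ℝ) ^ 2 * K) := by
  have hterm : ∀ w j, (if u ∈ candSet ω w j r ∧ v ∈ candSet ω w j r then
        2 / ((candSet ω w j r).card : ℝ) ^ 2 else 0) ≤
      if w ∈ torusBall u r then (if j ∈ commonFiles ω u v then 2 / z ^ 2 else 0) else 0 := by
    intro w j
    split_ifs with hcand hw hj hj
    · have := hF w j
      rw [Fcount] at this
      gcongr
    · simp only [candSet, Finset.mem_filter_univ] at hcand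
      exact absurd (mem_commonFiles.2 ⟨hcand.1.1, hcand.2.1⟩) hj
    · simp only [candSet, Finset.mem_filter_univ, torusDist_comm w u] at hcand
      exact absurd (mem_torusBall.2 hcand.1.2) hw
    all_goals positivity
  rw [selectProb, Nat.cast_pow]
  gcongr
  calc _ ≤ ∑ w, ∑ j, if w ∈ torusBall u r then
          (if j ∈ commonFiles ω u v then 2 / z ^ 2 else 0) else 0 :=
        Finset.sum_le_sum fun w _ ↦ Finset.sum_le_sum fun j _ ↦ hterm w j
    _ = (torusBall u r).card * tTwo ω u v * (2 / z ^ 2) := by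
        have hcard : tTwo ω u v = (commonFiles ω u v).card := rfl
        simp [Finset.sum_ite_irrel, Finset.sum_ite_mem, hcard, mul_assoc]

/-- The order of magnitude `r² M / K` of the number of copies of a file in a ball of radius `r`. -/
noncomputable def replicaScale (M K r : ℕ) : ℝ := (r : ℝ) ^ 2 * M / K

/-- The event that implies the bound on `selectProb`. The copies of each file are counted in `B_r`,
from below, and in `B_{2r}`, from above: the latter ball contains the neighbours in `H`. -/
structure IsTypical (ω : Placement m M K) (r μ : ℕ) : Prop where
  le_three_mul_tOne : ∀ u, M ≤ 3 * tOne ω u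
  tTwo_lt : ∀ u v, u ≠ v → tTwo ω u v < μ
  le_Fcount : ∀ w j, 1 / 32 * replicaScale M K r ≤ Fcount ω r w j
  Fcount_two_mul_le : ∀ w j, Fcount ω (2 * r) w j ≤ 73 * replicaScale M K r

namespace IsTypical

variable {ω : Placement m M K} {r μ : ℕ}

lemma goodPlacement (hω : IsTypical ω r μ) {δ : ℝ} (hδ : δ ≤ 1 / 3) : goodPlacement δ μ ω := by
  refine ⟨fun u ↦ ?_, hω.tTwo_lt⟩
  have hM : (M : ℝ) ≤ 3 * tOne ω u := mod_cast hω.le_three_mul_tOne u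
  calc δ * M ≤ 1 / 3 * M := by gcongr
    _ ≤ tOne ω u := by linarith

lemma Fcount_le (hω : IsTypical ω r μ) (w : Node m) (j : Fin K) :
    Fcount ω r w j ≤ 73 * replicaScale M K r :=
  (Nat.cast_le.2 (Fcount_mono ω (by omega) w j)).trans (hω.Fcount_two_mul_le w j)

lemma selectProb_le_div_eH (hω : IsTypical ω r μ) (hr : 0 < r) {u v : Node m}
    (huv : adjH ω r u v) : selectProb ω r u v ≤ 16 * 1024 * 73 * μ / eH ω r := by
  obtain ⟨hne, ⟨j, ⟨i, -⟩, -⟩, -⟩ := id huv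
  have hm : (0 : ℝ) < m := Nat.cast_pos.2 u.1.pos
  have hM : (0 : ℝ) < M := Nat.cast_pos.2 i.pos
  have hK : (0 : ℝ) < K := Nat.cast_pos.2 j.pos
  have hscale : 0 < replicaScale M K r := by unfold replicaScale; positivity
  have hselect := selectProb_le (by positivity) hω.le_Fcount u v
  have hedges := eH_le_mul hω.Fcount_two_mul_le
  set x := replicaScale M K r with hx
  rw [le_div_iff₀ (eH_pos huv)]
  calc selectProb ω r u v * eH ω r
      ≤ 16 * (r : ℝ) ^ 2 * μ * (2 / (1 / 32 * x) ^ 2) / ((m : ℝ) ^ 2 * K) *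
          ((m : ℝ) ^ 2 * (M * (73 * x)) / 2) := by
        have := (eH_pos huv).le
        refine mul_le_mul (hselect.trans ?_) hedges this (by positivity)
        gcongr
        · exact card_torusBall_le_mul_sq u hr
        · exact (hω.tTwo_lt u v hne).le
    _ = 16 * 1024 * 73 * μ * ((r : ℝ) ^ 2 * M / K) / x := by field_simp; norm_num
    _ = 16 * 1024 * 73 * μ := by rw [← replicaScale, ← hx]; field_simp

end IsTypical

lemma exists_of_not_isTypical {ω : Placement m M K} {r μ : ℕ} (hω : ¬ IsTypical ω r μ) :
    ((∃ u, tOne ω u ≤ M / 3) ∨ ∃ uv : Node m × Node m, uv.1 ≠ uv.2 ∧ μ ≤ tTwo ω uv.1 uv.2) ∨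
      (∃ wj : Node m × Fin K, 73 * replicaScale M K r < Fcount ω (2 * r) wj.1 wj.2) ∨
      ∃ wj : Node m × Fin K, Fcount ω r wj.1 wj.2 < 1 / 32 * replicaScale M K r := by
  by_contra! hgood
  obtain ⟨⟨hfiles, hpair⟩, hmany, hfew⟩ := hgood
  exact hω ⟨fun u ↦ by have := hfiles u; omega, fun u v ↦ hpair (u, v), fun w j ↦ hfew (w, j),
    fun w j ↦ hmany (w, j)⟩

end ConfigurationGraph

lemma one_sub_pow_le_one_sub_mul_div_two {x : ℝ} (hx0 : 0 ≤ x) (hx1 : x ≤ 1) {k : ℕ}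
    (hk : k * x ≤ 1) : (1 - x) ^ k ≤ 1 - k * x / 2 := by
  have hbernoulli : 1 + k * x ≤ (1 + x) ^ k := one_add_mul_le_pow (by linarith) k
  have hprod : (1 - x) ^ k * (1 + k * x) ≤ 1 :=
    calc (1 - x) ^ k * (1 + k * x) ≤ (1 - x) ^ k * (1 + x) ^ k := by gcongr
      _ = (1 - x ^ 2) ^ k := by rw [← mul_pow]; ring
      _ ≤ 1 := pow_le_one₀ (by nlinarith) (by nlinarith)
  have hkx : 0 ≤ k * x := by positivity
  nlinarith

section PlacementLaw

open MeasureTheory ProbabilityTheory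

/-- The law of the cache of a node: `M` files drawn independently and uniformly from `K` files. -/
noncomputable abbrev cacheLaw (M K : ℕ) : Measure (Fin M → Fin K) :=
  Measure.pi fun _ ↦ uniformOn Set.univ

/-- The law of the random placement, under which the caches of the nodes are independent. -/
noncomputable abbrev placementLaw (m M K : ℕ) : Measure (Placement m M K) :=
  Measure.pi fun _ ↦ cacheLaw M K

variable {m M K : ℕ}

lemma unifProb_eq_placementLaw_real (E : Set (Placement m M K)) :
    unifProb E = (placementLaw m M K).real E := by
  have hlaw : placementLaw m M K = uniformOn Set.univ := by
    simp only [placementLaw, cacheLaw, ← uniformOn_pi, Set.pi_univ]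
  have hcount : Measure.count E = ((Finset.univ.filter fun ω ↦ ω ∈ E).card : ENNReal) := by
    rw [← Measure.count_apply_finset, Finset.coe_filter_univ, Set.ofPred_mem_eq]
  rw [hlaw, measureReal_def, uniformOn_univ, hcount]
  simp [unifProb]

lemma unifProb_mono {Ω : Type*} [Fintype Ω] {E F : Set Ω} (h : E ⊆ F) :
    unifProb E ≤ unifProb F := by
  unfold unifProb
  gcongr

lemma uniformOn_univ_real_finset (T : Finset (Fin K)) :
    (uniformOn Set.univ).real (T : Set (Fin K)) = T.card / K := by
  simp [measureReal_def, uniformOn_univ]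

lemma cacheLaw_real_forall_mem (T : Finset (Fin K)) :
    (cacheLaw M K).real {x | ∀ i, x i ∈ T} = ((T.card : ℝ) / K) ^ M := by
  have hpi : {x : Fin M → Fin K | ∀ i, x i ∈ T} = Set.univ.pi fun _ ↦ (T : Set (Fin K)) := by
    ext x
    simp
  rw [hpi, measureReal_def, Measure.pi_pi, ENNReal.toReal_prod]
  simp only [← measureReal_def, uniformOn_univ_real_finset, Finset.prod_const, Finset.card_univ,
    Fintype.card_fin]

lemma cacheLaw_real_card_image_le_le {s : ℕ} (hs : s ≤ K) :
    (cacheLaw M K).real {x | (Finset.univ.image x).card ≤ s} ≤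
      K.choose s * ((s : ℝ) / K) ^ M := by
  have hsub : ∀ x : Fin M → Fin K, (Finset.univ.image x).card ≤ s →
      ∃ T : Finset.powersetCard s (Finset.univ : Finset (Fin K)), ∀ i, x i ∈ T.1 := by
    intro x hx
    obtain ⟨T, hT, hcard⟩ := Finset.exists_superset_card_eq hx (by simpa using hs)
    exact ⟨⟨T, Finset.mem_powersetCard_univ.2 hcard⟩,
      fun i ↦ hT (Finset.mem_image_of_mem x (Finset.mem_univ i))⟩
  refine (measureReal_mono (Set.ofPred_subset_ofPred.2 hsub)).trans ?_
  refine (measureReal_exists_le_card_mul (q := ((s : ℝ) / K) ^ M) fun T ↦ ?_).trans_eq (by simp)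
  rw [cacheLaw_real_forall_mem, Finset.mem_powersetCard_univ.1 T.2]

lemma measurableSet_cached (v : Node m) (j : Fin K) :
    MeasurableSet {ω : Placement m M K | cached ω v j} :=
  .of_discrete

lemma Fcount_eq_card_filter (ω : Placement m M K) (r : ℕ) (w : Node m) (j : Fin K) :
    Fcount ω r w j = ((torusBall w r).filter fun v ↦ ω ∈ {ω | cached ω v j}).card := by
  simp only [Fcount, candSet, torusBall, Finset.filter_filter, Set.mem_ofPred_eq, and_comm]

variable [NeZero K]

lemma cacheLaw_real_exists_eq (j : Fin K) :
    (cacheLaw M K).real {x | ∃ i, x i = j} = 1 - (1 - 1 / (K : ℝ)) ^ M := by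
  have hK : (K : ℝ) ≠ 0 := NeZero.ne _
  have hcompl : {x : Fin M → Fin K | ∃ i, x i = j} =
      {x | ∀ i, x i ∈ (Finset.univ.erase j)}ᶜ := by
    ext x
    simp
  rw [hcompl, probReal_compl_eq_one_sub .of_discrete, cacheLaw_real_forall_mem,
    Finset.card_erase_of_mem (Finset.mem_univ j), Finset.card_univ, Fintype.card_fin,
    Nat.cast_pred (NeZero.pos K), sub_div, div_self hK]

lemma cacheLaw_real_exists_eq_le (j : Fin K) :
    (cacheLaw M K).real {x | ∃ i, x i = j} ≤ M / K := by
  have hK : (1 : ℝ) ≤ K := Nat.one_le_cast.2 (NeZero.one_le)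
  have hbernoulli := one_add_mul_le_pow (a := -(1 / (K : ℝ))) (by
    linarith [(div_le_one (by positivity)).2 hK]) M
  rw [cacheLaw_real_exists_eq, sub_eq_add_neg 1 (1 / (K : ℝ)), ← mul_one_div (M : ℝ)]
  linarith

lemma le_cacheLaw_real_exists_eq (hMK : M ≤ K) (j : Fin K) :
    (M : ℝ) / K / 2 ≤ (cacheLaw M K).real {x | ∃ i, x i = j} := by
  have hK : (1 : ℝ) ≤ K := Nat.one_le_cast.2 (NeZero.one_le)
  have hpow := one_sub_pow_le_one_sub_mul_div_two (x := 1 / (K : ℝ)) (k := M) (by positivity)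
    ((div_le_one (by positivity)).2 hK)
    (by rw [mul_one_div]; exact div_le_one_of_le₀ (Nat.cast_le.2 hMK) (by positivity))
  rw [mul_one_div] at hpow
  rw [cacheLaw_real_exists_eq]
  linarith

lemma iIndepSet_cacheLaw (T : Finset (Fin K)) :
    iIndepSet (fun i ↦ {x | x i ∈ T}) (cacheLaw M K) :=
  iIndepSet_eval_preimage (fun _ ↦ uniformOn Set.univ) (S := fun _ ↦ (T : Set (Fin K)))
    fun _ ↦ .of_discrete

lemma cacheLaw_real_mem (T : Finset (Fin K)) (i : Fin M) :
    (cacheLaw M K).real {x | x i ∈ T} = T.card / K :=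
  (measureReal_pi_eval_preimage (fun _ ↦ uniformOn Set.univ) i T.measurableSet).trans
    (uniformOn_univ_real_finset T)

lemma cacheLaw_real_le_card_inter_image_le (hM : 0 < M) (hMK : M ^ 2 ≤ K) {T : Finset (Fin K)}
    (hT : T.card ≤ M) (k : ℕ) :
    (cacheLaw M K).real {x | k ≤ (T ∩ Finset.univ.image x).card} ≤
      Real.exp 1 * ((M : ℝ) ^ 2 / K) ^ k := by
  have hK : (0 : ℝ) < K := Nat.cast_pos.2 (NeZero.pos K)
  have hmean : ∑ i, (cacheLaw M K).real {x | x i ∈ T} ≤ (M : ℝ) ^ 2 / K :=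
    calc ∑ i, (cacheLaw M K).real {x | x i ∈ T} = M * (T.card / K) := by
          simp [cacheLaw_real_mem]
      _ ≤ M * (M / K) := by gcongr
      _ = (M : ℝ) ^ 2 / K := by ring
  have hMK' : (M : ℝ) ^ 2 ≤ K := mod_cast hMK
  refine le_trans (measureReal_mono (Set.ofPred_subset_ofPred.2 fun x hx ↦ ?_))
    (measureReal_le_card_filter_mem_le_pow (fun _ ↦ .of_discrete) (iIndepSet_cacheLaw T) hmean
      (by positivity) ((div_le_one hK).2 hMK') k)
  refine hx.trans ((Finset.card_le_card fun j hj ↦ ?_).trans (Finset.card_image_le (f := x)))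
  simp only [Finset.mem_inter, Finset.mem_image, Finset.mem_univ, true_and] at hj
  obtain ⟨hjT, i, rfl⟩ := hj
  exact Finset.mem_image_of_mem x (by simpa using hjT)

lemma placementLaw_real_tOne_le_le {s : ℕ} (hs : s ≤ K) (u : Node m) :
    (placementLaw m M K).real {ω | tOne ω u ≤ s} ≤ K.choose s * ((s : ℝ) / K) ^ M :=
  (measureReal_pi_eval_preimage (fun _ ↦ cacheLaw M K) u
    (S := {x | (Finset.univ.image x).card ≤ s}) .of_discrete).trans_le
    (cacheLaw_real_card_image_le_le hs)

lemma placementLaw_real_le_tTwo_le (hM : 0 < M) (hMK : M ^ 2 ≤ K) {u v : Node m} (huv : u ≠ v)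
    (k : ℕ) :
    (placementLaw m M K).real {ω | k ≤ tTwo ω u v} ≤ Real.exp 1 * ((M : ℝ) ^ 2 / K) ^ k := by
  have hindep : iIndepFun (fun w (ω : Placement m M K) ↦ ω w) (placementLaw m M K) :=
    iIndepFun_pi (X := fun _ ↦ id) fun _ ↦ aemeasurable_id
  refine measureReal_le_of_indepFun (measurable_pi_apply u) (measurable_pi_apply v)
    (hindep.indepFun huv)
    (S := {p | k ≤ (Finset.univ.image p.1 ∩ Finset.univ.image p.2).card}) .of_discrete
    fun x ↦ ?_
  have hcard : (Finset.univ.image x).card ≤ M := Finset.card_image_le.trans_eq (by simp)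
  exact (measureReal_pi_eval_preimage (fun _ ↦ cacheLaw M K) v
    (S := {y | k ≤ (Finset.univ.image x ∩ Finset.univ.image y).card}) .of_discrete).trans_le
    (cacheLaw_real_le_card_inter_image_le hM hMK hcard k)

lemma iIndepSet_cached (j : Fin K) :
    iIndepSet (fun v ↦ {ω | cached ω v j}) (placementLaw m M K) :=
  iIndepSet_eval_preimage (fun _ ↦ cacheLaw M K) (S := fun _ ↦ {x | ∃ i, x i = j})
    fun _ ↦ .of_discrete

lemma placementLaw_real_cached (v : Node m) (j : Fin K) :
    (placementLaw m M K).real {ω | cached ω v j} = (cacheLaw M K).real {x | ∃ i, x i = j} :=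
  measureReal_pi_eval_preimage (fun _ ↦ cacheLaw M K) v (S := {x | ∃ i, x i = j}) .of_discrete

lemma placementLaw_real_lt_Fcount_two_mul_le {r : ℕ} (hr : 0 < r) (w : Node m) (j : Fin K) :
    (placementLaw m M K).real {ω | 73 * replicaScale M K r < Fcount ω (2 * r) w j} ≤
      Real.exp (-(replicaScale M K r / 32)) := by
  have hscale : 0 ≤ replicaScale M K r := by unfold replicaScale; positivity
  have hmean : ∑ v ∈ torusBall w (2 * r), (placementLaw m M K).real {ω | cached ω v j} ≤
      36 * replicaScale M K r :=
    calc _ ≤ 36 * (r : ℝ) ^ 2 * (M / K) := by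
          simp only [placementLaw_real_cached, Finset.sum_const, nsmul_eq_mul]
          gcongr
          exacts [card_torusBall_two_mul_le w hr, cacheLaw_real_exists_eq_le j]
      _ = 36 * replicaScale M K r := by rw [replicaScale]; ring
  have htail := measureReal_le_card_filter_mem_le_exp_sub (fun v ↦ measurableSet_cached v j)
    (iIndepSet_cached j) hmean (73 * replicaScale M K r)
  simp only [← Fcount_eq_card_filter] at htail
  refine (measureReal_mono (Set.ofPred_subset_ofPred.2 fun _ ↦ le_of_lt)).trans (htail.trans ?_)
  gcongr
  linarith

lemma placementLaw_real_Fcount_lt_le {r : ℕ} (hr : r < m) (hMK : M ≤ K) (w : Node m)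
    (j : Fin K) :
    (placementLaw m M K).real {ω | Fcount ω r w j < 1 / 32 * replicaScale M K r} ≤
      Real.exp (-(replicaScale M K r / 32)) := by
  have hmean : replicaScale M K r / 8 ≤
      ∑ v ∈ torusBall w r, (placementLaw m M K).real {ω | cached ω v j} :=
    calc replicaScale M K r / 8 = (r : ℝ) ^ 2 / 4 * (M / K / 2) := by rw [replicaScale]; ring
      _ ≤ _ := by
          simp only [placementLaw_real_cached, Finset.sum_const, nsmul_eq_mul]
          gcongr
          exacts [sq_div_four_le_card_torusBall w hr, le_cacheLaw_real_exists_eq hMK j]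
  have htail := measureReal_card_filter_mem_le_le_exp_sub (fun v ↦ measurableSet_cached v j)
    (iIndepSet_cached j) hmean (1 / 32 * replicaScale M K r)
  simp only [← Fcount_eq_card_filter] at htail
  refine (measureReal_mono (Set.ofPred_subset_ofPred.2 fun _ ↦ le_of_lt)).trans (htail.trans ?_)
  gcongr
  linarith

lemma placementLaw_real_exists_ne_le_tTwo_le (hM : 0 < M) (hMK : M ^ 2 ≤ K) (k : ℕ) :
    (placementLaw m M K).real
        {ω | ∃ uv : Node m × Node m, uv.1 ≠ uv.2 ∧ k ≤ tTwo ω uv.1 uv.2} ≤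
      (m : ℝ) ^ 4 * (Real.exp 1 * ((M : ℝ) ^ 2 / K) ^ k) := by
  refine (measureReal_exists_le_card_mul (q := Real.exp 1 * ((M : ℝ) ^ 2 / K) ^ k)
    fun uv ↦ ?_).trans_eq ?_
  · by_cases huv : uv.1 = uv.2
    · simp only [huv, ne_eq, not_true_eq_false, false_and, Set.ofPred_false, measureReal_empty]
      positivity
    · simpa only [ne_eq, huv, not_false_eq_true, true_and] using
        placementLaw_real_le_tTwo_le hM hMK huv k
  · simp only [Fintype.card_prod, Fintype.card_fin, Nat.cast_mul]
    ring

lemma placementLaw_real_not_isTypical_le {r : ℕ} (hM : 0 < M) (hMK : M ^ 2 ≤ K) (hr0 : 0 < r)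
    (hrm : r < m) (μ : ℕ) :
    (placementLaw m M K).real {ω | ¬ IsTypical ω r μ} ≤
      (m : ℝ) ^ 2 * (K.choose (M / 3) * (((M / 3 : ℕ) : ℝ) / K) ^ M) +
      (m : ℝ) ^ 4 * (Real.exp 1 * ((M : ℝ) ^ 2 / K) ^ μ) +
      2 * ((m : ℝ) ^ 2 * K * Real.exp (-(replicaScale M K r / 32))) := by
  have hMK1 : M ≤ K := (Nat.le_self_pow two_ne_zero M).trans hMK
  have hfiles := measureReal_exists_le_card_mul fun u : Node m ↦
    placementLaw_real_tOne_le_le (M := M) (K := K) (s := M / 3) (by omega) u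
  have hpair := placementLaw_real_exists_ne_le_tTwo_le (m := m) hM hMK μ
  have hmany := measureReal_exists_le_card_mul fun wj : Node m × Fin K ↦
    placementLaw_real_lt_Fcount_two_mul_le (M := M) hr0 wj.1 wj.2
  have hfew := measureReal_exists_le_card_mul fun wj : Node m × Fin K ↦
    placementLaw_real_Fcount_lt_le hrm hMK1 wj.1 wj.2
  refine (measureReal_mono (Set.ofPred_subset_ofPred.2 fun ω ↦ exists_of_not_isTypical)
    (measure_ne_top _ _)).trans ?_
  simp only [Set.ofPred_or]
  refine (measureReal_union_le _ _).trans ((add_le_add (measureReal_union_le _ _)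
    (measureReal_union_le _ _)).trans ?_)
  simp only [Fintype.card_prod, Fintype.card_fin, Nat.cast_mul, Nat.cast_pow, ← sq]
    at hfiles hmany hfew
  linarith

end PlacementLaw

section Asymptotics

open MeasureTheory

lemma tendsto_natCast_rpow_atTop {a : ℝ} (ha : 0 < a) :
    Tendsto (fun n : ℕ ↦ (n : ℝ) ^ a) atTop atTop :=
  (tendsto_rpow_atTop ha).comp tendsto_natCast_atTop_atTop

lemma eventually_ceil_rpow_sq_le {a : ℝ} (ha0 : 0 ≤ a) (ha : a < 1 / 2) :
    ∀ᶠ n : ℕ in atTop, (⌈(n : ℝ) ^ a⌉₊ : ℝ) ^ 2 ≤ (n : ℝ) ^ (1 / 2 + a) := by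
  filter_upwards [(tendsto_natCast_rpow_atTop (sub_pos.2 ha)).eventually_ge_atTop 4,
    eventually_ge_atTop 1] with n hn4 hn1
  have hn : (1 : ℝ) ≤ n := Nat.one_le_cast.2 hn1
  have hceil := Nat.ceil_le_two_mul (le_trans (by norm_num) (Real.one_le_rpow hn ha0))
  calc (⌈(n : ℝ) ^ a⌉₊ : ℝ) ^ 2 ≤ (2 * (n : ℝ) ^ a) ^ 2 := by gcongr
    _ = 4 * ((n : ℝ) ^ a) ^ 2 := by ring
    _ ≤ (n : ℝ) ^ (1 / 2 - a) * ((n : ℝ) ^ a) ^ 2 := by gcongr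
    _ = (n : ℝ) ^ (1 / 2 + a) := by
        rw [← Real.rpow_mul_natCast (by positivity), ← Real.rpow_add (by positivity)]
        push_cast
        ring_nf

lemma eventually_ceil_rpow_sq_lt {a : ℝ} (ha0 : 0 ≤ a) (ha : a < 1 / 2) :
    ∀ᶠ n : ℕ in atTop, ⌈(n : ℝ) ^ a⌉₊ ^ 2 < n := by
  filter_upwards [eventually_ceil_rpow_sq_le ha0 ha, eventually_gt_atTop 1] with n hsq hn1
  have hn : (1 : ℝ) < n := Nat.one_lt_cast.2 hn1
  have hlt := hsq.trans_lt (Real.rpow_lt_self_of_one_lt hn (by linarith))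
  exact_mod_cast hlt

lemma eventually_exp_neg_mul_rpow_le {c ε : ℝ} (hc : 0 < c) (hε : 0 < ε) (k : ℕ) :
    ∀ᶠ n : ℕ in atTop, Real.exp (-(c * (n : ℝ) ^ ε)) ≤ ((n : ℝ) ^ k)⁻¹ := by
  have hlog : ∀ᶠ n : ℕ in atTop, k * Real.log n ≤ c * (n : ℝ) ^ ε := by
    filter_upwards [((isLittleO_log_rpow_atTop hε).const_mul_left (k : ℝ)).def hc
      |>.natCast_atTop] with n hn
    exact (le_abs_self _).trans (hn.trans_eq (by
      rw [Real.norm_of_nonneg (by positivity)]))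
  filter_upwards [hlog, eventually_gt_atTop 0] with n hn hn0
  have hn0' : (0 : ℝ) < n := Nat.cast_pos.2 hn0
  calc Real.exp (-(c * (n : ℝ) ^ ε)) ≤ Real.exp (-(k * Real.log n)) := by gcongr
    _ = ((n : ℝ) ^ k)⁻¹ := by rw [Real.exp_neg, Real.exp_nat_mul, Real.exp_log hn0']

lemma choose_mul_div_pow_le {n M s : ℕ} (hs : 8 ≤ s) (hsn : s ^ 2 ≤ n) (hsM : 3 * s ≤ M) :
    (n.choose s : ℝ) * ((s : ℝ) / n) ^ M ≤ ((n : ℝ) ^ 4)⁻¹ := by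
  have hn : (0 : ℝ) < n := Nat.cast_pos.2 (by nlinarith)
  have hsn' : (s : ℝ) ^ 2 ≤ n := mod_cast hsn
  have hs1 : (1 : ℝ) ≤ s := Nat.one_le_cast.2 (by omega)
  have hsq : ((s : ℝ) ^ 3 / n ^ 2) ^ 2 ≤ (n : ℝ)⁻¹ :=
    calc ((s : ℝ) ^ 3 / n ^ 2) ^ 2 = ((s : ℝ) ^ 2) ^ 3 / n ^ 4 := by ring
      _ ≤ (n : ℝ) ^ 3 / n ^ 4 := by gcongr
      _ = (n : ℝ)⁻¹ := by field_simp
  have hbase : (s : ℝ) ^ 3 / n ^ 2 ≤ 1 := by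
    refine (sq_le_one_iff₀ (by positivity)).1 (hsq.trans (inv_le_one_of_one_le₀ ?_))
    nlinarith
  calc (n.choose s : ℝ) * ((s : ℝ) / n) ^ M ≤ (n : ℝ) ^ s * ((s : ℝ) / n) ^ (3 * s) := by
        gcongr ?_ * ?_
        · exact_mod_cast Nat.choose_le_pow n s
        · exact pow_le_pow_of_le_one (by positivity) ((div_le_one hn).2 (by nlinarith)) hsM
    _ = ((s : ℝ) ^ 3 / n ^ 2) ^ s := by
        rw [pow_mul, ← mul_pow]
        field_simp
    _ ≤ ((s : ℝ) ^ 3 / n ^ 2) ^ 8 := pow_le_pow_of_le_one (by positivity) hbase hs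
    _ = (((s : ℝ) ^ 3 / n ^ 2) ^ 2) ^ 4 := by ring
    _ ≤ ((n : ℝ)⁻¹) ^ 4 := by gcongr
    _ = ((n : ℝ) ^ 4)⁻¹ := inv_pow _ _

variable {α β : ℝ}

lemma one_lt_of_log_log_le (hcond : ∃ N₀ : ℕ, ∀ n : ℕ, N₀ ≤ n →
    1 + 2 * Real.log (Real.log n) / Real.log n ≤ α + 2 * β) : 1 < α + 2 * β := by
  obtain ⟨N₀, hN₀⟩ := hcond
  have hlog := Real.tendsto_log_atTop.comp (tendsto_natCast_atTop_atTop (R := ℝ))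
  obtain ⟨n, hn, hlog0, hloglog⟩ := ((eventually_ge_atTop N₀).and
    ((hlog.eventually_gt_atTop 0).and
      ((Real.tendsto_log_atTop.comp hlog).eventually_gt_atTop 0))).exists
  have hquot : 0 < 2 * Real.log (Real.log n) / Real.log n :=
    div_pos (mul_pos two_pos hloglog) hlog0
  linarith [hN₀ n hn]

lemma eventually_choose_Mf_div_three_mul_pow_le (hα0 : 0 < α) (hα1 : α < 1 / 2) :
    ∀ᶠ n : ℕ in atTop, (n.choose (Mf α n / 3) : ℝ) * (((Mf α n / 3 : ℕ) : ℝ) / n) ^ Mf α n ≤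
      ((n : ℝ) ^ 4)⁻¹ := by
  filter_upwards [eventually_ceil_rpow_sq_lt hα0.le hα1,
    (tendsto_nat_ceil_atTop.comp (tendsto_natCast_rpow_atTop hα0)).eventually_ge_atTop 24]
    with n hsq hM
  have hM24 : 24 ≤ Mf α n := hM
  have hMn : Mf α n ^ 2 < n := hsq
  refine choose_mul_div_pow_le (by omega) (le_trans ?_ hMn.le) (by omega)
  gcongr
  exact Nat.div_le_self _ _

lemma eventually_exp_one_mul_Mf_sq_div_pow_le (hα0 : 0 < α) (hα1 : α < 1 / 2) {μ : ℕ}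
    (hμ : 5 ≤ (1 / 2 - α) * μ) :
    ∀ᶠ n : ℕ in atTop, Real.exp 1 * ((Mf α n : ℝ) ^ 2 / n) ^ μ ≤ ((n : ℝ) ^ 4)⁻¹ := by
  filter_upwards [eventually_ceil_rpow_sq_le hα0.le hα1, eventually_ge_atTop 3] with n hsq hn3
  have hn : (3 : ℝ) ≤ n := mod_cast hn3
  have hexp : Real.exp 1 ≤ n := by linarith [Real.exp_one_lt_d9]
  have hratio : (Mf α n : ℝ) ^ 2 / n ≤ (n : ℝ) ^ (-(1 / 2 - α)) := by
    rw [div_le_iff₀ (by linarith), ← Real.rpow_add_one (by linarith)]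
    exact hsq.trans_eq (by ring_nf)
  calc Real.exp 1 * ((Mf α n : ℝ) ^ 2 / n) ^ μ ≤ n * ((n : ℝ) ^ (-(1 / 2 - α))) ^ μ := by gcongr
    _ = n * (n : ℝ) ^ (-((1 / 2 - α) * μ)) := by
        rw [← Real.rpow_mul_natCast (by positivity), neg_mul]
    _ ≤ n * (n : ℝ) ^ (-5 : ℝ) := by
        gcongr
        linarith
    _ = ((n : ℝ) ^ 4)⁻¹ := by
        rw [Real.rpow_neg (by positivity), Real.rpow_ofNat]
        field_simp

lemma rpow_le_replicaScale {n : ℕ} (hn : 0 < n) :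
    (n : ℝ) ^ (α + 2 * β - 1) ≤ replicaScale (Mf α n) n (rf β n) := by
  have hn' : (0 : ℝ) < n := Nat.cast_pos.2 hn
  have hpow : (n : ℝ) ^ (α + 2 * β - 1) = ((n : ℝ) ^ β) ^ 2 * (n : ℝ) ^ α / n := by
    rw [Real.rpow_sub_one hn'.ne', ← Real.rpow_mul_natCast hn'.le, ← Real.rpow_add hn']
    push_cast
    ring_nf
  rw [hpow, replicaScale]
  gcongr
  exacts [Nat.le_ceil _, Nat.le_ceil _]

lemma eventually_exp_neg_replicaScale_div_le (hαβ : 1 < α + 2 * β) :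
    ∀ᶠ n : ℕ in atTop, Real.exp (-(replicaScale (Mf α n) n (rf β n) / 32)) ≤
      ((n : ℝ) ^ 4)⁻¹ := by
  filter_upwards [eventually_exp_neg_mul_rpow_le (show (0 : ℝ) < 1 / 32 by norm_num)
    (sub_pos.2 hαβ) 4, eventually_gt_atTop 0] with n hn hn0
  refine le_trans (Real.exp_le_exp.2 ?_) hn
  linarith [rpow_le_replicaScale (α := α) (β := β) hn0]

lemma eventually_placementLaw_real_not_isTypical_le (hα0 : 0 < α) (hα1 : α < 1 / 2) (hβ0 : 0 < β)
    (hβ1 : β < 1 / 2) (hαβ : 1 < α + 2 * β) {μ : ℕ} (hμ : 5 ≤ (1 / 2 - α) * μ) :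
    ∀ᶠ m : ℕ in atTop,
      (placementLaw m (Mf α (m ^ 2)) (m ^ 2)).real {ω | ¬ IsTypical ω (rf β (m ^ 2)) μ} ≤
        ((m ^ 2 : ℕ) : ℝ)⁻¹ := by
  filter_upwards [eventually_ge_atTop 2, (tendsto_pow_atTop two_ne_zero).eventually
    ((eventually_ceil_rpow_sq_lt hα0.le hα1).and <|
      (eventually_ceil_rpow_sq_lt hβ0.le hβ1).and <|
      (eventually_choose_Mf_div_three_mul_pow_le hα0 hα1).and <|
      (eventually_exp_one_mul_Mf_sq_div_pow_le hα0 hα1 hμ).and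
      (eventually_exp_neg_replicaScale_div_le hαβ))] with m hm ⟨hM, hr, hfiles, hpair, hcount⟩
  have hn0 : (0 : ℝ) < ((m ^ 2 : ℕ) : ℝ) := by positivity
  have : NeZero (m ^ 2) := ⟨by positivity⟩
  have hbound := placementLaw_real_not_isTypical_le (M := Mf α (m ^ 2)) (K := m ^ 2)
    (r := rf β (m ^ 2)) (Nat.ceil_pos.2 (Real.rpow_pos_of_pos hn0 α)) (le_of_lt hM)
    (Nat.ceil_pos.2 (Real.rpow_pos_of_pos hn0 β)) (lt_of_pow_lt_pow_left₀ 2 m.zero_le hr) μ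
  have hn4 : (4 : ℝ) ≤ ((m ^ 2 : ℕ) : ℝ) := mod_cast Nat.pow_le_pow_left hm 2
  have hm4 : (m : ℝ) ^ 4 = ((m ^ 2 : ℕ) : ℝ) ^ 2 := by push_cast; ring
  rw [hm4, ← Nat.cast_pow] at hbound
  set n : ℝ := ((m ^ 2 : ℕ) : ℝ)
  calc _ ≤ _ := hbound
    _ ≤ n * (n ^ 4)⁻¹ + n ^ 2 * (n ^ 4)⁻¹ + 2 * (n * n * (n ^ 4)⁻¹) := by gcongr
    _ ≤ n⁻¹ := by
      field_simp
      nlinarith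

lemma eventually_one_sub_inv_le_unifProb_isTypical (hα0 : 0 < α) (hα1 : α < 1 / 2) (hβ0 : 0 < β)
    (hβ1 : β < 1 / 2) (hαβ : 1 < α + 2 * β) {μ : ℕ} (hμ : 5 ≤ (1 / 2 - α) * μ) :
    ∀ᶠ m : ℕ in atTop, 1 - ((m ^ 2 : ℕ) : ℝ)⁻¹ ≤
      unifProb {ω : Placement m (Mf α (m ^ 2)) (m ^ 2) | IsTypical ω (rf β (m ^ 2)) μ} := by
  filter_upwards [eventually_placementLaw_real_not_isTypical_le hα0 hα1 hβ0 hβ1 hαβ hμ,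
    eventually_gt_atTop 0] with m hm hm0
  have : NeZero (m ^ 2) := ⟨by positivity⟩
  rw [← Set.compl_ofPred, probReal_compl_eq_one_sub .of_discrete] at hm
  rw [unifProb_eq_placementLaw_real]
  linarith

end Asymptotics

/-- Let `K = n`, `M = ⌈n^α⌉`, `r = ⌈n^β⌉` with constants
`0 < α, β < 1/2` satisfying `α + 2β ≥ 1 + 2·log log n/log n`, under the Uniform
popularity distribution.  With high probability over the cache placement — in
particular on the event that the placement is `((1-α)/3, μ)`-good for a constant `μ`
and that every node `w` and file `j` have `F_j(w) = Θ(r²M/n)` cached replicas of `W_j`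
in `B_r(w)` — for every edge `(u,v)` of the configuration graph `H`, the conditional
probability (given the placement) that a single request of Strategy II selects the
pair `{u,v}` as its two candidate servers is `O(1/e(H))`. -/
theorem statement9 (α β : ℝ) (hα0 : 0 < α) (hα1 : α < 1 / 2) (hβ0 : 0 < β)
    (hβ1 : β < 1 / 2)
    (hcond : ∃ N₀ : ℕ, ∀ n : ℕ, N₀ ≤ n →
      1 + 2 * Real.log (Real.log (n : ℝ)) / Real.log (n : ℝ) ≤ α + 2 * β) :
    ∃ (μ : ℕ) (C c c₁ c₂ : ℝ), 0 < C ∧ 0 < c ∧ 0 < c₁ ∧ 0 < c₂ ∧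
      ∃ N : ℕ, ∀ m : ℕ, N ≤ m →
        1 - (((m ^ 2 : ℕ) : ℝ)) ^ (-c) ≤
          unifProb {ω : Placement m (Mf α (m ^ 2)) (m ^ 2) |
            goodPlacement ((1 - α) / 3) μ ω ∧
            (∀ (w : Node m) (j : Fin (m ^ 2)),
              c₁ * ((rf β (m ^ 2) : ℝ) ^ 2 * (Mf α (m ^ 2) : ℝ) / ((m ^ 2 : ℕ) : ℝ)) ≤
                  (Fcount ω (rf β (m ^ 2)) w j : ℝ) ∧
              (Fcount ω (rf β (m ^ 2)) w j : ℝ) ≤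
                  c₂ * ((rf β (m ^ 2) : ℝ) ^ 2 * (Mf α (m ^ 2) : ℝ) /
                    ((m ^ 2 : ℕ) : ℝ))) ∧
            ∀ u v : Node m, adjH ω (rf β (m ^ 2)) u v →
              selectProb ω (rf β (m ^ 2)) u v ≤ C / eH ω (rf β (m ^ 2))} := by
  have hα : 0 < 1 / 2 - α := sub_pos.2 hα1
  obtain ⟨μ, hμ⟩ := exists_nat_ge (5 / (1 / 2 - α))
  have hμ0 : (0 : ℝ) < μ := (div_pos (by norm_num) hα).trans_le hμ
  obtain ⟨N, hN⟩ := eventually_atTop.1 (eventually_one_sub_inv_le_unifProb_isTypical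
    hα0 hα1 hβ0 hβ1 (one_lt_of_log_log_le hcond) ((div_le_iff₀' hα).1 hμ))
  refine ⟨μ, 16 * 1024 * 73 * μ, 1, 1 / 32, 73, by positivity, one_pos, by norm_num, by norm_num,
    N, fun m hm ↦ ?_⟩
  rw [Real.rpow_neg_one]
  refine (hN m hm).trans (unifProb_mono fun ω hω ↦ ⟨hω.goodPlacement (by linarith),
    fun w j ↦ ⟨hω.le_Fcount w j, hω.Fcount_le w j⟩, fun u v huv ↦ ?_⟩)
  have hn : (0 : ℝ) < (m ^ 2 : ℕ) := Nat.cast_pos.2 (pow_pos u.1.pos 2)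
  exact hω.selectProb_le_div_eH (Nat.ceil_pos.2 (Real.rpow_pos_of_pos hn β)) huv
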